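/- Let d ≥ 2, let H be a d×d Hermitian matrix and ρ a d×d density matrix such that ΔH := H − (Tr[H]/d)·I and Δρ := ρ − I/d are both nonzero. Set μ := Tr[H]/d, Σ^(p) := ∫_{U(d)} (Tr[UρU†H] − μ)^p dμ_Haar(U), Σ² := Tr[ΔH²]·Tr[Δρ²]/(d²−1), Σ_G^(p) := (p−1)!!·(Σ²)^{p/2} for p even and Σ_G^(p) := 0 for p odd, and N* := min{⌊√d⌋, ⌊(d/(2√3))^{4/7}⌋}. Then for every real t with |t| < min{√(N*/Σ²), N*/ΔE_max}, the tail of the moment series satisfies Σ_{p=N*}^{∞} (|t|^p/p!)·|Σ^(p) − Σ_G^(p)| ≤ (1/⌈N*/2⌉!) · t²Σ²/(1 − t²Σ²/N*) + (1/N*!) · |t|·ΔE_max/(1 − |t|·ΔE_max/N*). -/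

import Mathlib

open MeasureTheory Matrix
open scoped ComplexOrder

noncomputable instance unitaryGroup.measurableSpace (d : ℕ) :
    MeasurableSpace (Matrix.unitaryGroup (Fin d) ℂ) := borel _

instance unitaryGroup.borelSpace (d : ℕ) :
    BorelSpace (Matrix.unitaryGroup (Fin d) ℂ) := ⟨rfl⟩

/-!
Write `f` for the centered energy on the unitary group and `R` for a bound of `|f|`. Invariance of
the Haar measure gives integration by parts along the conjugation orbit of `ρ`; summed over the
matrix units it becomes `2 d E[f ^ (m + 1)] = m E[f ^ (m - 1) ‖∇f‖²]`, where `‖∇f‖²` is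
`-Tr [UρU†, H] ^ 2`. Flowing for a quarter turn in either direction along the sign of the gradient
changes `f` by a multiple of the trace norm of the gradient, so `‖∇f‖² ≤ 2 R²`. Hence the even
moments of `f` obey the Gaussian recursion with variance proxy `R² / d`. Since `N² ≤ d` and
`|t| R < N` give `t² R² / d < 1`, the terms decay like `t² Σ² / (2k)‼`, and the tail is dominated by
its first terms.
-/

open scoped Nat

/-- The `p`-th moment of the centered Gaussian of variance `v`. At `p = 0` the truncated
`p - 1 = 0` gives the correct value `1`. -/
noncomputable def gaussianMoment (v : ℝ) (p : ℕ) : ℝ :=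
  if Even p then ((p - 1)‼ : ℝ) * v ^ (p / 2) else 0

/-- Sequences that behave like the moments `s p = E[f ^ p]` of a real random variable with
`|f| ≤ R` whose even moments obey the Gaussian recursion with variance proxy `c`. -/
structure IsSubgaussianMomentSeq (s : ℕ → ℝ) (R c : ℝ) : Prop where
  zero : s 0 = 1
  even_nonneg (k : ℕ) : 0 ≤ s (2 * k)
  abs_odd_le (k : ℕ) : |s (2 * k + 1)| ≤ R * s (2 * k)
  even_succ_le (k : ℕ) : s (2 * (k + 1)) ≤ (2 * k + 1) * c * s (2 * k)

theorem gaussianMoment_two_mul_succ (v : ℝ) (k : ℕ) :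
    gaussianMoment v (2 * (k + 1)) = ((2 * k + 1)‼ : ℝ) * v ^ (k + 1) := by
  rw [gaussianMoment, if_pos (even_two_mul _), Nat.mul_div_cancel_left _ two_pos]
  rfl

theorem gaussianMoment_of_odd (v : ℝ) {p : ℕ} (hp : Odd p) : gaussianMoment v p = 0 :=
  if_neg (Nat.not_even_iff_odd.2 hp)

section Tail

theorem four_pow_mul_doubleFactorial_le (m k : ℕ) :
    4 ^ k * (2 * (m + 1))‼ ≤ (2 * (m + k + 1))‼ := by
  induction k with
  | zero => simp
  | succ k ih =>
    calc 4 ^ (k + 1) * (2 * (m + 1))‼ = 4 * (4 ^ k * (2 * (m + 1))‼) := by ring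
      _ ≤ (2 * (m + k + 1) + 2) * (2 * (m + k + 1))‼ := Nat.mul_le_mul (by lia) ih
      _ = (2 * (m + (k + 1) + 1))‼ := (Nat.doubleFactorial_add_two _).symm

theorem summable_and_tsum_le_of_even_odd_geometric {T : ℕ → ℝ} (hT : ∀ p, 0 ≤ T p) {a b r : ℝ}
    (hr : 0 ≤ r) (hr1 : r < 1) (heven : ∀ k, T (2 * k) ≤ a * r ^ k)
    (hodd : ∀ k, T (2 * k + 1) ≤ b * r ^ k) :
    Summable T ∧ ∑' p, T p ≤ (a + b) * (1 - r)⁻¹ := by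
  have hgeo (e : ℝ) : HasSum (fun k => e * r ^ k) (e * (1 - r)⁻¹) :=
    (hasSum_geometric_of_lt_one hr hr1).mul_left e
  have hse := Summable.of_nonneg_of_le (fun k => hT (2 * k)) heven (hgeo a).summable
  have hso := Summable.of_nonneg_of_le (fun k => hT (2 * k + 1)) hodd (hgeo b).summable
  refine ⟨hse.even_add_odd hso, ?_⟩
  rw [← tsum_even_add_odd hse hso, add_mul]
  exact add_le_add (hasSum_le heven hse.hasSum (hgeo a)) (hasSum_le hodd hso.hasSum (hgeo b))

variable {T : ℕ → ℝ} {x y : ℝ}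

theorem summable_and_tsum_even_tail_le (hT : ∀ p, 0 ≤ T p) (hx : 0 ≤ x) (hy : 0 ≤ y)
    (heven : ∀ k, T (2 * (k + 1)) ≤ x / (2 * (k + 1))‼)
    (hodd : ∀ k : ℕ, T (2 * (k + 1) + 1) ≤ y / (2 * (k + 1) + 1) * (x / (2 * (k + 1))‼)) (m : ℕ) :
    Summable (fun k => T (2 * (m + 1) + k)) ∧
      ∑' k, T (2 * (m + 1) + k) ≤
        (1 + y / (2 * (m + 1) + 1)) * (4 / 3) * (x / (2 * (m + 1))‼) := by
  have hdecay (k : ℕ) : x / (2 * (m + k + 1))‼ ≤ x / (2 * (m + 1))‼ * (1 / 4) ^ k := by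
    calc x / (2 * (m + k + 1))‼ ≤ x / (4 ^ k * (2 * (m + 1))‼) := by
          gcongr
          exact_mod_cast four_pow_mul_doubleFactorial_le m k
      _ = _ := by rw [_root_.one_div_pow, mul_one_div, div_div, mul_comm]
  convert summable_and_tsum_le_of_even_odd_geometric (fun k => hT (2 * (m + 1) + k))
    (a := x / (2 * (m + 1))‼) (b := y / (2 * (m + 1) + 1) * (x / (2 * (m + 1))‼))
    (r := 1 / 4) (by norm_num) (by norm_num) (fun k => ?_) (fun k => ?_) using 2
  · ring
  · exact (congrArg T (by ring)).trans_le ((heven (m + k)).trans (hdecay k))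
  · calc T (2 * (m + 1) + (2 * k + 1)) = T (2 * (m + k + 1) + 1) := congrArg T (by ring)
      _ ≤ y / (2 * ((m + k : ℕ) + 1) + 1) * (x / (2 * (m + k + 1))‼) := hodd (m + k)
      _ ≤ y / (2 * (m + 1) + 1) * (x / (2 * (m + 1))‼ * (1 / 4) ^ k) := by
        gcongr
        · simp
        · exact hdecay k
      _ = y / (2 * (m + 1) + 1) * (x / (2 * (m + 1))‼) * (1 / 4) ^ k := by ring

theorem summable_and_tsum_tail_two_mul_le (hT : ∀ p, 0 ≤ T p) (hx : 0 ≤ x)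
    (heven : ∀ k, T (2 * (k + 1)) ≤ x / (2 * (k + 1))‼)
    (hodd : ∀ k : ℕ, T (2 * (k + 1) + 1) ≤ y / (2 * (k + 1) + 1) * (x / (2 * (k + 1))‼)) {m : ℕ}
    (hyN : y < 2 * (m + 1)) (hxN : 2 * (m + 1) * x ≤ y) :
    Summable (fun k => T (2 * (m + 1) + k)) ∧
      ∑' k, T (2 * (m + 1) + k) ≤ x / (m + 1)! + y / (2 * (m + 1))! := by
  have hy : 0 ≤ y := hxN.trans' (by positivity)
  obtain ⟨hsum, hle⟩ := summable_and_tsum_even_tail_le hT hx hy heven hodd m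
  refine ⟨hsum, hle.trans ?_⟩
  have hy1 : y / (2 * (m + 1) + 1) ≤ 1 := (div_le_one (by positivity)).2 (by linarith)
  calc (1 + y / (2 * (m + 1) + 1)) * (4 / 3) * (x / (2 * (m + 1))‼)
      ≤ (1 + 1) * (4 / 3) * (x / (2 * (m + 1))‼) := by gcongr
    _ = 8 / 3 / 2 ^ (m + 1) * (x / (m + 1)!) := by
      rw [Nat.doubleFactorial_two_mul]
      push_cast
      field_simp
      ring
    _ ≤ x / (m + 1)! + y / (2 * (m + 1))! := by
      rcases m with _ | m
      · norm_num at hxN ⊢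
        linarith
      · have hpow : (1 : ℝ) ≤ 2 ^ m := one_le_pow₀ one_le_two
        refine le_add_of_le_of_nonneg (mul_le_of_le_one_left (by positivity) ?_) (by positivity)
        rw [div_le_one (by positivity), pow_succ, pow_succ]
        linarith

theorem div_doubleFactorial_add_le_of_odd_start (hx : 0 ≤ x) {m : ℕ}
    (hxN : (2 * (m + 1) + 1) * x ≤ y) :
    x / (2 * (m + 1))‼ + (1 + 1) * (4 / 3) * (x / (2 * (m + 2))‼) ≤
      x / (m + 2)! + y / (2 * (m + 1) + 1)! := by
  have hm : x / (2 * (m + 1))‼ + (1 + 1) * (4 / 3) * (x / (2 * (m + 2))‼) =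
      (m + 10 / 3) / 2 ^ (m + 1) * (x / (m + 2)!) := by
    rw [Nat.doubleFactorial_two_mul, Nat.doubleFactorial_two_mul, Nat.factorial_succ (m + 1)]
    push_cast
    field_simp
    ring
  rw [hm]
  rcases m with _ | _ | m
  · norm_num [Nat.factorial] at hxN ⊢
    linarith
  · norm_num [Nat.factorial] at hxN ⊢
    linarith
  · have hpow : (m : ℝ) + 1 ≤ 2 ^ m := by exact_mod_cast Nat.lt_two_pow_self
    have hy : 0 ≤ y := hxN.trans' (by positivity)
    refine le_add_of_le_of_nonneg (mul_le_of_le_one_left (by positivity) ?_) (by positivity)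
    rw [div_le_one (by positivity), pow_succ, pow_succ, pow_succ]
    push_cast
    linarith

theorem summable_and_tsum_tail_two_mul_add_one_le (hT : ∀ p, 0 ≤ T p) (hx : 0 ≤ x)
    (hone : T 1 ≤ y) (heven : ∀ k, T (2 * (k + 1)) ≤ x / (2 * (k + 1))‼)
    (hodd : ∀ k : ℕ, T (2 * (k + 1) + 1) ≤ y / (2 * (k + 1) + 1) * (x / (2 * (k + 1))‼)) {m : ℕ}
    (hyN : y < 2 * m + 1) (hxN : (2 * m + 1) * x ≤ y) :
    Summable (fun k => T (2 * m + 1 + k)) ∧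
      ∑' k, T (2 * m + 1 + k) ≤ x / (m + 1)! + y / (2 * m + 1)! := by
  have hy : 0 ≤ y := hxN.trans' (by positivity)
  obtain ⟨hsum, hle⟩ := summable_and_tsum_even_tail_le hT hx hy heven hodd m
  have hshift (k : ℕ) : T (2 * (m + 1) + k) = T (2 * m + 1 + (k + 1)) := congrArg T (by ring)
  simp only [hshift] at hsum hle
  have hsum' := (summable_nat_add_iff (f := fun k => T (2 * m + 1 + k)) 1).1 hsum
  refine ⟨hsum', ?_⟩
  rw [hsum'.tsum_eq_zero_add, add_zero]
  rcases m with _ | m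
  · norm_num [Nat.doubleFactorial, Nat.factorial] at hyN hle ⊢
    calc T 1 + ∑' k, T (1 + (k + 1)) ≤ y + (1 + 1 / 3) * (4 / 3) * (x / 2) := by
          refine add_le_add hone (hle.trans ?_)
          gcongr
      _ ≤ x + y := by linarith
  · push_cast at hyN hxN
    calc T (2 * (m + 1) + 1) + ∑' k, T (2 * (m + 1) + 1 + (k + 1))
        ≤ y / (2 * (m + 1) + 1) * (x / (2 * (m + 1))‼) +
            (1 + y / (2 * ((m + 1 : ℕ) + 1) + 1)) * (4 / 3) * (x / (2 * (m + 2))‼) :=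
          add_le_add (hodd m) hle
      _ ≤ 1 * (x / (2 * (m + 1))‼) + (1 + 1) * (4 / 3) * (x / (2 * (m + 2))‼) := by
        gcongr <;> refine (div_le_one (by positivity)).2 ?_ <;> push_cast <;> linarith
      _ ≤ x / (m + 2)! + y / (2 * (m + 1) + 1)! := by
        rw [one_mul]
        exact div_doubleFactorial_add_le_of_odd_start hx hxN

theorem summable_and_tsum_tail_le_of_le_doubleFactorial (hT : ∀ p, 0 ≤ T p) (hx : 0 ≤ x)
    (hone : T 1 ≤ y) (heven : ∀ k, T (2 * (k + 1)) ≤ x / (2 * (k + 1))‼)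
    (hodd : ∀ k : ℕ, T (2 * (k + 1) + 1) ≤ y / (2 * (k + 1) + 1) * (x / (2 * (k + 1))‼))
    {N : ℕ} (hyN : y < N) (hxN : N * x ≤ y) :
    Summable (fun k => T (N + k)) ∧ ∑' k, T (N + k) ≤ x / ⌈(N : ℝ) / 2⌉₊! + y / N ! := by
  have hceil (m : ℕ) : ⌈(m + 1 : ℝ)⌉₊ = m + 1 := by exact_mod_cast Nat.ceil_natCast (m + 1)
  rcases Nat.even_or_odd' N with ⟨m, rfl | rfl⟩
  · rcases m with _ | m
    · simp only [mul_zero, Nat.cast_zero, zero_mul] at hyN hxN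
      linarith
    · push_cast at hyN hxN ⊢
      rw [mul_div_cancel_left₀ _ two_ne_zero, hceil]
      exact summable_and_tsum_tail_two_mul_le hT hx heven hodd hyN hxN
  · have h : ⌈((2 * m + 1 : ℕ) : ℝ) / 2⌉₊ = m + 1 := by
      rw [Nat.ceil_eq_iff m.succ_ne_zero]
      push_cast
      constructor <;> linarith
    push_cast at hyN hxN
    rw [h]
    exact summable_and_tsum_tail_two_mul_add_one_le hT hx hone heven hodd hyN hxN

end Tail

namespace IsSubgaussianMomentSeq

variable {s : ℕ → ℝ} {R c t : ℝ} (h : IsSubgaussianMomentSeq s R c)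
include h

theorem two_nonneg : 0 ≤ s 2 := h.even_nonneg 1

theorem two_le : s 2 ≤ c := by
  simpa [h.zero] using h.even_succ_le 0

theorem proxy_nonneg : 0 ≤ c := h.two_nonneg.trans h.two_le

theorem bound_nonneg : 0 ≤ R := by
  simpa [h.zero] using (abs_nonneg _).trans (h.abs_odd_le 0)

theorem even_le (k : ℕ) : s (2 * (k + 1)) ≤ (2 * k + 1)‼ * c ^ k * s 2 := by
  have hc := h.proxy_nonneg
  induction k with
  | zero => simp
  | succ k ih =>
    calc s (2 * (k + 1 + 1)) ≤ (2 * (k + 1 : ℕ) + 1) * c * s (2 * (k + 1)) := h.even_succ_le (k + 1)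
      _ ≤ (2 * (k + 1 : ℕ) + 1) * c * ((2 * k + 1)‼ * c ^ k * s 2) := by gcongr
      _ = (2 * (k + 1) + 1)‼ * c ^ (k + 1) * s 2 := by
        rw [show 2 * (k + 1) + 1 = 2 * k + 1 + 2 by ring, Nat.doubleFactorial_add_two]
        push_cast
        ring

theorem abs_even_sub_gaussianMoment_le (k : ℕ) :
    |s (2 * (k + 1)) - gaussianMoment (s 2) (2 * (k + 1))| ≤ (2 * k + 1)‼ * c ^ k * s 2 := by
  have h2 := h.two_nonneg
  rw [gaussianMoment_two_mul_succ]
  refine abs_sub_le_of_nonneg_of_le (h.even_nonneg _) (h.even_le k) (by positivity) ?_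
  rw [pow_succ, ← mul_assoc]
  gcongr
  exact h.two_le

theorem even_term_le {b : ℝ} (ht : t ^ 2 * c ≤ 1) {k : ℕ}
    (hb : b ≤ (2 * k + 1)‼ * c ^ k * s 2) :
    |t| ^ (2 * (k + 1)) / (2 * (k + 1))! * b ≤ t ^ 2 * s 2 / (2 * (k + 1))‼ := by
  have h2 := h.two_nonneg
  have hc := h.proxy_nonneg
  have hfac : ((2 * (k + 1))! : ℝ) = (2 * (k + 1))‼ * (2 * k + 1)‼ := by
    exact_mod_cast Nat.factorial_eq_mul_doubleFactorial (2 * k + 1)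
  calc |t| ^ (2 * (k + 1)) / (2 * (k + 1))! * b
      ≤ |t| ^ (2 * (k + 1)) / (2 * (k + 1))! * ((2 * k + 1)‼ * c ^ k * s 2) := by gcongr
    _ = (t ^ 2 * c) ^ k * (t ^ 2 * s 2) / (2 * (k + 1))‼ := by
      rw [pow_mul, sq_abs, hfac]
      field_simp
      ring
    _ ≤ t ^ 2 * s 2 / (2 * (k + 1))‼ := by
      refine div_le_div_of_nonneg_right ?_ (by positivity)
      exact mul_le_of_le_one_left (by positivity) (pow_le_one₀ (by positivity) ht)

theorem abs_odd_term_le (k : ℕ) :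
    |t| ^ (2 * k + 1) / (2 * k + 1)! * |s (2 * k + 1)| ≤
      |t| * R / (2 * k + 1) * (|t| ^ (2 * k) / (2 * k)! * s (2 * k)) := by
  calc |t| ^ (2 * k + 1) / (2 * k + 1)! * |s (2 * k + 1)|
      ≤ |t| ^ (2 * k + 1) / (2 * k + 1)! * (R * s (2 * k)) := by
        gcongr
        exact h.abs_odd_le k
    _ = _ := by
        rw [Nat.factorial_succ]
        push_cast
        field_simp
        ring

theorem summable_and_tsum_tail_le {N : ℕ} (hN : N ^ 2 * c ≤ R ^ 2) (ht : |t| * R < N) :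
    Summable (fun k => |t| ^ (N + k) / (N + k)! * |s (N + k) - gaussianMoment (s 2) (N + k)|) ∧
      ∑' k, |t| ^ (N + k) / (N + k)! * |s (N + k) - gaussianMoment (s 2) (N + k)| ≤
        t ^ 2 * s 2 / (⌈(N : ℝ) / 2⌉₊)! + |t| * R / N ! := by
  have h2 := h.two_nonneg
  have hR := h.bound_nonneg
  have hN0 : (0 : ℝ) < N := lt_of_le_of_lt (by positivity) ht
  have hNc : N * (t ^ 2 * c) ≤ |t| * R := by
    refine le_of_mul_le_mul_left ?_ hN0
    calc N * (N * (t ^ 2 * c)) = t ^ 2 * (N ^ 2 * c) := by ring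
      _ ≤ t ^ 2 * R ^ 2 := by gcongr
      _ = |t| * R * (|t| * R) := by rw [← sq_abs]; ring
      _ ≤ N * (|t| * R) := by gcongr
  have htc : t ^ 2 * c ≤ 1 := (mul_le_iff_le_one_right hN0).1 (hNc.trans ht.le)
  have hodd (k : ℕ) := h.abs_odd_term_le (t := t) k
  refine summable_and_tsum_tail_le_of_le_doubleFactorial
    (T := fun p => |t| ^ p / p ! * |s p - gaussianMoment (s 2) p|)
    (fun p => by positivity) (by positivity) ?_ (fun k => ?_) (fun k => ?_) ht ?_
  · simpa [gaussianMoment_of_odd _ odd_one, h.zero] using hodd 0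
  · exact h.even_term_le htc (h.abs_even_sub_gaussianMoment_le k)
  · rw [gaussianMoment_of_odd _ (odd_two_mul_add_one _), sub_zero]
    refine (hodd (k + 1)).trans ?_
    push_cast
    gcongr
    exact h.even_term_le htc (h.even_le k)
  · exact hNc.trans' (by gcongr; exact h.two_le)

end IsSubgaussianMomentSeq

theorem div_factorial_le_mul_div_one_sub {z N : ℝ} (h : z < N) (hN : 0 < N) (m : ℕ) :
    z / m ! ≤ 1 / m ! * (z / (1 - z / N)) := by
  have hpos : 0 < 1 - z / N := sub_pos.2 ((div_lt_one hN).2 h)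
  rw [div_eq_mul_one_div, mul_comm]
  gcongr
  rw [le_div_iff₀ hpos, mul_sub, mul_one, sub_le_self_iff, mul_div_assoc']
  exact div_nonneg (mul_self_nonneg z) hN.le

theorem sq_mul_lt_of_abs_lt_sqrt_div {t v N : ℝ} (hN : 0 ≤ N) (h : |t| < √(N / v)) :
    t ^ 2 * v < N := by
  have hsq : t ^ 2 < N / v := sq_abs t ▸ (Real.lt_sqrt (abs_nonneg t)).1 h
  have hv : 0 < v := by
    by_contra hv
    exact (hsq.trans_le (div_nonpos_of_nonneg_of_nonpos hN (not_lt.1 hv))).not_ge (sq_nonneg t)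
  exact (lt_div_iff₀ hv).1 hsq

theorem sq_le_of_le_floor_sqrt {N d : ℕ} (h : N ≤ ⌊√d⌋₊) : N ^ 2 ≤ d := by
  rw [Real.nat_floor_real_sqrt_eq_nat_sqrt] at h
  exact Nat.le_sqrt'.1 h

local notation "Ad" => Unitary.conjStarAlgAut ℂ (Matrix _ _ ℂ)

variable {n : Type*} [Fintype n]

theorem isHermitian_I_smul_lie {X A : Matrix n n ℂ} (hX : X.IsHermitian) (hA : A.IsHermitian) :
    (Complex.I • ⁅X, A⁆).IsHermitian := by
  rw [Matrix.IsHermitian, Ring.lie_def, conjTranspose_smul, conjTranspose_sub, conjTranspose_mul,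
    conjTranspose_mul, hX.eq, hA.eq, RCLike.star_def, Complex.conj_I, neg_smul, ← smul_neg, neg_sub]

theorem trace_lie_mul (K X A : Matrix n n ℂ) : (⁅K, X⁆ * A).trace = (K * ⁅X, A⁆).trace := by
  rw [Ring.lie_def, Ring.lie_def, Matrix.sub_mul, Matrix.mul_sub, trace_sub, trace_sub,
    Matrix.mul_assoc, Matrix.mul_assoc X, trace_mul_comm X, Matrix.mul_assoc]

theorem im_trace_mul_eq_zero {A B : Matrix n n ℂ} (hA : A.IsHermitian) (hB : B.IsHermitian) :
    (A * B).trace.im = 0 := by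
  rw [← Complex.conj_eq_iff_im, ← RCLike.star_def, ← trace_conjTranspose, conjTranspose_mul, hA.eq,
    hB.eq, trace_mul_comm]

variable [DecidableEq n]

theorem trace_lie_sq (X A : Matrix n n ℂ) :
    (⁅X, A⁆ ^ 2).trace = 2 * (X * A * (X * A)).trace - 2 * (X ^ 2 * A ^ 2).trace := by
  have hexpand : ⁅X, A⁆ ^ 2 =
      X * A * (X * A) - X * (A ^ 2 * X) - A * (X ^ 2 * A) + A * (X * (A * X)) := by
    rw [Ring.lie_def]
    noncomm_ring
  have h1 : (X * (A ^ 2 * X)).trace = (X ^ 2 * A ^ 2).trace := by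
    rw [trace_mul_comm, Matrix.mul_assoc, ← sq, trace_mul_comm]
  have h2 : (A * (X ^ 2 * A)).trace = (X ^ 2 * A ^ 2).trace := by
    rw [trace_mul_comm, Matrix.mul_assoc, ← sq]
  have h3 : (A * (X * (A * X))).trace = (X * A * (X * A)).trace := by
    rw [trace_mul_comm, Matrix.mul_assoc, Matrix.mul_assoc, Matrix.mul_assoc]
  rw [hexpand, trace_add, trace_sub, trace_sub, h1, h2, h3]
  ring

/-- The expected energy `Tr[UρU†H]` of the state `ρ` rotated by `U`. -/
noncomputable def rotatedEnergy (H ρ : Matrix n n ℂ) (U : unitaryGroup n ℂ) : ℝ :=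
  (Ad U ρ * H).trace.re

theorem isHermitian_conjStarAlgAut {B : Matrix n n ℂ} (hB : B.IsHermitian) (U : unitaryGroup n ℂ) :
    (Ad U B).IsHermitian :=
  isHermitian_mul_mul_conjTranspose (U : Matrix n n ℂ) hB

theorem trace_conjStarAlgAut (U : unitaryGroup n ℂ) (B : Matrix n n ℂ) :
    (Ad U B).trace = B.trace := by
  rw [Unitary.conjStarAlgAut_apply, trace_mul_cycle, Unitary.coe_star_mul_self, Matrix.one_mul]

theorem trace_conjStarAlgAut_mul_conjStarAlgAut (U V : unitaryGroup n ℂ) (A B : Matrix n n ℂ) :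
    (Ad U A * Ad V B).trace = (Ad (star V * U) A * B).trace := by
  rw [← trace_conjStarAlgAut (star V), map_mul, ← Unitary.conjStarAlgAut_mul_apply,
    ← Unitary.conjStarAlgAut_mul_apply, Unitary.star_mul_self, map_one]
  rfl

theorem ofReal_rotatedEnergy {H ρ : Matrix n n ℂ} (hH : H.IsHermitian) (hρ : ρ.IsHermitian)
    (U : unitaryGroup n ℂ) : (rotatedEnergy H ρ U : ℂ) = (Ad U ρ * H).trace :=
  Complex.ext rfl (im_trace_mul_eq_zero (isHermitian_conjStarAlgAut hρ U) hH).symm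

section Rearrangement

theorem map_normSq_mem_doublyStochastic (U : unitaryGroup n ℂ) :
    (U : Matrix n n ℂ).map Complex.normSq ∈ doublyStochastic ℝ n := by
  rw [mem_doublyStochastic_iff_sum]
  refine ⟨fun i j => Complex.normSq_nonneg _, fun i => ?_, fun j => ?_⟩
  · have h := congrFun₂ (Unitary.coe_mul_star_self U) i i
    simp only [mul_apply, Unitary.coe_star, star_apply, one_apply_eq, RCLike.star_def,
      Complex.mul_conj] at h
    exact_mod_cast h
  · have h := congrFun₂ (Unitary.coe_star_mul_self U) j j
    simp only [mul_apply, star_apply, one_apply_eq, RCLike.star_def,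
      ← Complex.normSq_eq_conj_mul_self] at h
    exact_mod_cast h

theorem dotProduct_mulVec_mem_of_mem_doublyStochastic {s : Set ℝ} (hs : Convex ℝ s)
    {S : Matrix n n ℝ} (hS : S ∈ doublyStochastic ℝ n) {a b : n → ℝ}
    (h : ∀ σ : Equiv.Perm n, a ⬝ᵥ b ∘ σ ∈ s) : a ⬝ᵥ S *ᵥ b ∈ s := by
  have hlin : IsLinearMap ℝ fun S : Matrix n n ℝ => a ⬝ᵥ S *ᵥ b :=
    ⟨fun S T => by rw [add_mulVec, dotProduct_add], fun c S => by
      rw [smul_mulVec, dotProduct_smul]⟩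
  rw [← SetLike.mem_coe, doublyStochastic_eq_convexHull_permMatrix] at hS
  refine convexHull_min ?_ (hs.is_linear_preimage hlin) hS
  rintro _ ⟨σ, rfl⟩
  rw [Set.mem_preimage, permMatrix_mulVec]
  exact h σ

theorem trace_conjStarAlgAut_diagonal_mul_diagonal_re (U : unitaryGroup n ℂ) (a b : n → ℝ) :
    (Ad U (diagonal (RCLike.ofReal ∘ b)) * diagonal (RCLike.ofReal ∘ a)).trace.re =
      a ⬝ᵥ (U : Matrix n n ℂ).map Complex.normSq *ᵥ b := by
  simp only [Unitary.conjStarAlgAut_apply, trace, diag_apply, dotProduct, mulVec, Complex.re_sum,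
    mul_diagonal, Finset.mul_sum]
  refine Finset.sum_congr rfl fun i _ => ?_
  rw [mul_apply, Finset.sum_mul, Complex.re_sum]
  refine Finset.sum_congr rfl fun j _ => ?_
  rw [mul_diagonal, star_apply, RCLike.star_def, mul_right_comm (U.1 i j), Complex.mul_conj]
  simp only [Function.comp_apply, map_apply, RCLike.ofReal_eq_complex_ofReal,
    ← Complex.ofReal_mul, Complex.ofReal_re]
  ring

theorem rotatedEnergy_mem_of_convex {H ρ : Matrix n n ℂ} (hH : H.IsHermitian) (hρ : ρ.IsHermitian)
    {s : Set ℝ} (hs : Convex ℝ s)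
    (h : ∀ σ : Equiv.Perm n, hH.eigenvalues ⬝ᵥ hρ.eigenvalues ∘ σ ∈ s) (U : unitaryGroup n ℂ) :
    rotatedEnergy H ρ U ∈ s := by
  rw [rotatedEnergy, hH.spectral_theorem, hρ.spectral_theorem,
    ← Unitary.conjStarAlgAut_mul_apply, trace_conjStarAlgAut_mul_conjStarAlgAut,
    trace_conjStarAlgAut_diagonal_mul_diagonal_re]
  exact dotProduct_mulVec_mem_of_mem_doublyStochastic hs (map_normSq_mem_doublyStochastic _) h

theorem dotProduct_comp_perm_mem_Icc {d : ℕ} {a b : Fin d → ℝ} (ha : Monotone a) (hb : Antitone b)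
    (σ : Equiv.Perm (Fin d)) :
    a ⬝ᵥ b ∘ σ ∈ Set.Icc (∑ j, b j * a j) (∑ j, b j.rev * a j) := by
  have hrev : Monotone (b ∘ Fin.rev) := hb.comp Fin.rev_anti
  have hlo := (ha.antivary hb).sum_mul_le_sum_mul_comp_perm (σ := σ)
  have hhi := (ha.monovary hrev).sum_mul_comp_perm_le_sum_mul (σ := σ.trans Fin.revPerm)
  constructor
  · simpa [dotProduct, mul_comm] using hlo
  · simpa [dotProduct, mul_comm] using hhi

theorem rotatedEnergy_mem_Icc {d : ℕ} {H ρ : Matrix (Fin d) (Fin d) ℂ} (hH : H.IsHermitian)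
    (hρ : ρ.IsHermitian) {ε lam : Fin d → ℝ} (hε : Monotone ε)
    (hεeig : ∃ σ : Equiv.Perm (Fin d), ∀ i, ε i = hH.eigenvalues (σ i)) (hlam : Antitone lam)
    (hlameig : ∃ σ : Equiv.Perm (Fin d), ∀ i, lam i = hρ.eigenvalues (σ i))
    (U : unitaryGroup (Fin d) ℂ) :
    rotatedEnergy H ρ U ∈ Set.Icc (∑ j, lam j * ε j) (∑ j, lam j.rev * ε j) := by
  obtain ⟨σ, hσ⟩ := hεeig
  obtain ⟨τ, hτ⟩ := hlameig
  refine rotatedEnergy_mem_of_convex hH hρ (convex_Icc _ _) (fun π => ?_) U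
  have h := dotProduct_comp_perm_mem_Icc hε hlam (σ.trans (π.trans τ.symm))
  convert h using 1
  simp [dotProduct, hσ, hτ, Equiv.sum_comp σ (fun i => hH.eigenvalues i * hρ.eigenvalues (π i))]

end Rearrangement

section Gradient

theorem sum_sq_le_half_sq_sum_abs {ι : Type*} [Fintype ι] {g : ι → ℝ} (hg : ∑ i, g i = 0) :
    ∑ i, g i ^ 2 ≤ (∑ i, |g i|) ^ 2 / 2 := by
  classical
  have h (i : ι) : |g i| ≤ (∑ j, |g j|) / 2 := by
    have hsplit := Finset.add_sum_erase Finset.univ (fun j => |g j|) (Finset.mem_univ i)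
    have hrest : |g i| ≤ ∑ j ∈ Finset.univ.erase i, |g j| := by
      rw [eq_neg_of_add_eq_zero_left ((Finset.add_sum_erase _ g (Finset.mem_univ i)).trans hg),
        abs_neg]
      exact Finset.abs_sum_le_sum_abs _ _
    linarith
  calc ∑ i, g i ^ 2 = ∑ i, |g i| * |g i| := by simp only [abs_mul_abs_self, sq]
    _ ≤ ∑ i, |g i| * ((∑ j, |g j|) / 2) := by gcongr with i; exact h i
    _ = (∑ i, |g i|) ^ 2 / 2 := by rw [← Finset.sum_mul]; ring

/-- `(√2)⁻¹ (1 + u K)`, which for `u = ± i` is the quarter turn `exp(u π K / 4)` generated by a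
Hermitian involution `K`. -/
noncomputable def quarterTurn (K : Matrix n n ℂ) (u : ℂ) : Matrix n n ℂ :=
  ((√2)⁻¹ : ℝ) • (1 + u • K)

theorem quarterTurn_mem_unitaryGroup {K : Matrix n n ℂ} (hK : K.IsHermitian) (hKK : K * K = 1)
    {u : ℂ} (hu : u * u = -1) (hus : star u = -u) :
    quarterTurn K u ∈ unitaryGroup n ℂ := by
  have hKs : star K = K := hK
  have hr : (√2)⁻¹ * (√2)⁻¹ * 2 = 1 := by
    rw [← mul_inv, Real.mul_self_sqrt zero_le_two, inv_mul_cancel₀ two_ne_zero]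
  have hprod : (1 + u • K) * (1 - u • K) = (2 : ℝ) • (1 : Matrix n n ℂ) := by
    rw [← (Commute.one_left _).mul_self_sub_mul_self_eq, smul_mul_smul_comm, hKK, hu, neg_smul,
      one_smul, sub_neg_eq_add, one_mul, two_smul]
  rw [mem_unitaryGroup_iff, quarterTurn, star_smul, star_add, star_one, star_smul, hKs, hus,
    star_trivial, smul_mul_smul_comm, neg_smul, ← sub_eq_add_neg, hprod, smul_smul, hr, one_smul]

theorem quarterTurn_conj_sub {K : Matrix n n ℂ} (hK : K.IsHermitian) (X : Matrix n n ℂ) :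
    quarterTurn K Complex.I * X * star (quarterTurn K Complex.I) -
        quarterTurn K (-Complex.I) * X * star (quarterTurn K (-Complex.I)) =
      Complex.I • ⁅K, X⁆ := by
  have hKs : star K = K := hK
  have hr : (√2)⁻¹ * (√2)⁻¹ = 1 / 2 := by
    rw [← mul_inv, Real.mul_self_sqrt zero_le_two, inv_eq_one_div]
  simp only [quarterTurn, star_smul, star_add, star_one, hKs, star_trivial, star_neg,
    RCLike.star_def, Complex.conj_I, smul_mul_assoc, mul_smul_comm, smul_smul, hr]
  simp only [Ring.lie_def, smul_mul_assoc, mul_smul_comm, add_mul, mul_add, Matrix.one_mul,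
    Matrix.mul_one]
  module

theorem exists_isHermitian_involution_trace_sq_le {G : Matrix n n ℂ} (hG : G.IsHermitian)
    (hG0 : G.trace = 0) :
    ∃ K : Matrix n n ℂ, K.IsHermitian ∧ K * K = 1 ∧
      (G ^ 2).trace.re ≤ (K * G).trace.re ^ 2 / 2 := by
  set g := hG.eigenvalues
  set V := hG.eigenvectorUnitary
  have hGV : G = Ad V (diagonal (RCLike.ofReal ∘ g)) := hG.spectral_theorem
  refine ⟨Ad V (diagonal fun i => (if 0 ≤ g i then 1 else -1 : ℂ)),
    isHermitian_conjStarAlgAut (isHermitian_diagonal_of_self_adjoint _ ?_) V, ?_, ?_⟩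
  · ext i
    simp only [Pi.star_apply]
    split_ifs <;> simp
  · rw [← map_mul, diagonal_mul_diagonal, ← map_one (Ad V), ← diagonal_one]
    congr with i
    split_ifs <;> simp
  · have hsum : ∑ i, g i = 0 := by
      simpa [g, hG0, ← Complex.ofReal_sum] using hG.trace_eq_sum_eigenvalues.symm
    convert sum_sq_le_half_sq_sum_abs hsum
    · rw [hGV, ← map_pow, trace_conjStarAlgAut, diagonal_pow, trace_diagonal, Complex.re_sum]
      simp [← Complex.ofReal_pow]
    · rw [hGV, ← map_mul, trace_conjStarAlgAut, diagonal_mul_diagonal, trace_diagonal,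
        Complex.re_sum]
      refine Finset.sum_congr rfl fun i _ => ?_
      split_ifs with h
      · simp [abs_of_nonneg h]
      · simp [abs_of_neg (not_le.1 h)]

theorem neg_trace_lie_sq_re_le {X A : Matrix n n ℂ} (hX : X.IsHermitian) (hA : A.IsHermitian)
    {R : ℝ} (hR : ∀ W : unitaryGroup n ℂ, |rotatedEnergy A X W| ≤ R) :
    -(⁅X, A⁆ ^ 2).trace.re ≤ 2 * R ^ 2 := by
  obtain ⟨K, hK, hKK, hle⟩ := exists_isHermitian_involution_trace_sq_le
    (isHermitian_I_smul_lie hX hA)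
    (by rw [trace_smul, LieAlgebra.matrix_trace_commutator_zero, smul_zero])
  have hdiff : (K * Complex.I • ⁅X, A⁆).trace.re =
      rotatedEnergy A X ⟨_, quarterTurn_mem_unitaryGroup hK hKK Complex.I_mul_I (by simp)⟩ -
        rotatedEnergy A X ⟨_, quarterTurn_mem_unitaryGroup hK hKK
          (u := -Complex.I) (by simp) (by simp)⟩ := by
    simp only [rotatedEnergy, Unitary.conjStarAlgAut_apply]
    rw [← Complex.sub_re, ← trace_sub, ← Matrix.sub_mul, quarterTurn_conj_sub hK, mul_smul_comm,
      smul_mul_assoc, trace_smul, trace_smul, trace_lie_mul]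
  have habs : |(K * Complex.I • ⁅X, A⁆).trace.re| ≤ 2 * R := by
    rw [hdiff, two_mul]
    exact (abs_sub _ _).trans (add_le_add (hR _) (hR _))
  calc -(⁅X, A⁆ ^ 2).trace.re = ((Complex.I • ⁅X, A⁆) ^ 2).trace.re := by
        rw [smul_pow, Complex.I_sq, neg_one_smul, trace_neg, Complex.neg_re]
    _ ≤ (K * Complex.I • ⁅X, A⁆).trace.re ^ 2 / 2 := hle
    _ ≤ (2 * R) ^ 2 / 2 := by
      gcongr ?_ / 2
      exact sq_le_sq' (abs_le.1 habs).1 (abs_le.1 habs).2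
    _ = 2 * R ^ 2 := by ring

end Gradient

section Haar

theorem integrable_of_continuous {G E : Type*} [TopologicalSpace G] [CompactSpace G]
    [MeasurableSpace G] [OpensMeasurableSpace G] (μ : Measure G) [IsFiniteMeasure μ]
    [NormedAddCommGroup E] {f : G → E} (hf : Continuous f) : Integrable f μ :=
  hf.integrable_of_hasCompactSupport (.of_compactSpace f)

theorem integral_eq_zero_of_hasDerivAt_mul_left {G E : Type*} [Group G] [TopologicalSpace G]
    [ContinuousMul G] [CompactSpace G] [MeasurableSpace G] [BorelSpace G] (μ : Measure G)
    [IsFiniteMeasure μ] [μ.IsMulLeftInvariant] [NormedAddCommGroup E] [NormedSpace ℝ E]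
    {f f' : G → E} (hf : Continuous f) (hf' : Continuous f') {γ : ℝ → G}
    (h : ∀ (x : G) (s : ℝ), HasDerivAt (fun s => f (γ s * x)) (f' (γ s * x)) s) :
    ∫ x, f' x ∂μ = 0 := by
  obtain ⟨C, hC⟩ := isCompact_univ.exists_bound_of_continuousOn hf'.continuousOn
  have hint {g : G → E} (hg : Continuous g) (s : ℝ) : Integrable (fun x => g (γ s * x)) μ :=
    integrable_of_continuous μ (hg.comp (continuous_const_mul _))
  have hmain := (hasDerivAt_integral_of_dominated_loc_of_deriv_le (s := Set.univ) (x₀ := (0 : ℝ))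
    (bound := fun _ => C) (F := fun s x => f (γ s * x)) (F' := fun s x => f' (γ s * x))
    Filter.univ_mem (.of_forall fun s => (hint hf s).aestronglyMeasurable) (hint hf 0)
    (hint hf' 0).aestronglyMeasurable (.of_forall fun x s _ => hC (γ s * x) trivial)
    (integrable_const C) (.of_forall fun x s _ => h x s)).2
  simp only [integral_mul_left_eq_self] at hmain
  exact hmain.unique (hasDerivAt_const _ _)

theorem continuous_conjStarAlgAut (B : Matrix n n ℂ) :
    Continuous fun U : unitaryGroup n ℂ => Ad U B := by
  simp only [Unitary.conjStarAlgAut_apply]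
  fun_prop

instance compactSpace_unitaryGroup : CompactSpace (unitaryGroup n ℂ) := by
  have hclosed : IsClosed (unitaryGroup n ℂ : Set (Matrix n n ℂ)) := by
    have : (unitaryGroup n ℂ : Set (Matrix n n ℂ)) = {U | U * star U = 1} :=
      Set.ext fun _ => mem_unitaryGroup_iff
    exact this ▸ isClosed_eq (by fun_prop) continuous_const
  refine isCompact_iff_compactSpace.1 ((isCompact_univ_pi fun _ => isCompact_univ_pi fun _ =>
    isCompact_closedBall (0 : ℂ) 1).of_isClosed_subset hclosed fun U hU i _ j _ => ?_)
  simpa using entry_norm_bound_of_unitary hU i j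

theorem continuous_rotatedEnergy (H ρ : Matrix n n ℂ) : Continuous (rotatedEnergy H ρ) := by
  have := continuous_conjStarAlgAut ρ
  unfold rotatedEnergy
  fun_prop

section MatrixUnits

theorem sum_mul_single_mul_apply (P Q : Matrix n n ℂ) :
    ∑ i, ∑ j, (P * single i j 1 * Q : Matrix n n ℂ) i j = P.trace * Q.trace := by
  simp only [trace, diag_apply, Finset.sum_mul_sum]
  refine Finset.sum_congr rfl fun i _ => Finset.sum_congr rfl fun j _ => ?_
  simp [mul_apply, single_apply, ite_and]

theorem sum_single_mul_apply (Q : Matrix n n ℂ) :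
    ∑ i, ∑ j, (single i j 1 * Q : Matrix n n ℂ) i j = Fintype.card n * Q.trace := by
  simpa using sum_mul_single_mul_apply 1 Q

theorem sum_mul_single_apply (P : Matrix n n ℂ) :
    ∑ i, ∑ j, (P * single i j 1 : Matrix n n ℂ) i j = Fintype.card n * P.trace := by
  simpa [mul_comm] using sum_mul_single_mul_apply P 1

theorem sum_trace_single_mul_mul_apply (C D : Matrix n n ℂ) :
    ∑ i, ∑ j, (single i j 1 * C).trace * D i j = (C * D).trace := by
  simp only [trace_single_mul, one_smul]
  rw [Finset.sum_comm]
  simp only [trace, diag_apply, mul_apply]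

theorem sum_lie_lie_single_apply (X A : Matrix n n ℂ) :
    ∑ i, ∑ j, (⁅⁅single i j (1 : ℂ), X⁆, A⁆ : Matrix n n ℂ) i j =
      2 * (Fintype.card n * (X * A).trace - X.trace * A.trace) := by
  have hexpand (E : Matrix n n ℂ) :
      ⁅⁅E, X⁆, A⁆ = E * (X * A) - X * E * A - A * E * X + A * X * E := by
    simp only [Ring.lie_def]
    noncomm_ring
  simp only [hexpand, Matrix.add_apply, Matrix.sub_apply, Finset.sum_add_distrib,
    Finset.sum_sub_distrib, sum_single_mul_apply, sum_mul_single_mul_apply, sum_mul_single_apply]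
  rw [trace_mul_comm A X]
  ring

theorem sum_lie_single_mul_mul_apply (X A C : Matrix n n ℂ) :
    ∑ i, ∑ j, (⁅single i j (1 : ℂ), X⁆ * A * C : Matrix n n ℂ) i j =
      Fintype.card n * (X * A * C).trace - X.trace * (A * C).trace := by
  have hexpand (E : Matrix n n ℂ) : ⁅E, X⁆ * A * C = E * (X * A * C) - X * E * (A * C) := by
    simp only [Ring.lie_def]
    noncomm_ring
  simp only [hexpand, Matrix.sub_apply, Finset.sum_sub_distrib, sum_single_mul_apply,
    sum_mul_single_mul_apply]

theorem sum_mul_lie_single_mul_apply (C X A : Matrix n n ℂ) :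
    ∑ i, ∑ j, (C * (⁅single i j (1 : ℂ), X⁆ * A) : Matrix n n ℂ) i j =
      C.trace * (X * A).trace - (C * X).trace * A.trace := by
  have hexpand (E : Matrix n n ℂ) : C * (⁅E, X⁆ * A) = C * E * (X * A) - C * X * E * A := by
    simp only [Ring.lie_def]
    noncomm_ring
  simp only [hexpand, Matrix.sub_apply, Finset.sum_sub_distrib, sum_mul_single_mul_apply]

end MatrixUnits

section ByParts

open scoped Matrix.Norms.L2Operator

theorem hasDerivAt_conjStarAlgAut_expUnitary (K : selfAdjoint (Matrix n n ℂ)) (X : Matrix n n ℂ)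
    (s : ℝ) :
    HasDerivAt (fun s : ℝ => Ad (selfAdjoint.expUnitary (s • K)) X)
      (Complex.I • ⁅(K : Matrix n n ℂ), Ad (selfAdjoint.expUnitary (s • K)) X⁆) s := by
  have hexp : HasDerivAt (fun s : ℝ => (selfAdjoint.expUnitary (s • K) : Matrix n n ℂ))
      (Complex.I • (K : Matrix n n ℂ) * selfAdjoint.expUnitary (s • K)) s := by
    simp only [selfAdjoint.expUnitary_coe, selfAdjoint.val_smul, smul_comm Complex.I]
    exact hasDerivAt_exp_smul_const' (𝕂 := ℝ) (Complex.I • (K : Matrix n n ℂ)) s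
  refine ((hexp.mul_const X).mul hexp.star).congr_deriv ?_
  simp only [Unitary.conjStarAlgAut_apply, Ring.lie_def, star_mul, star_smul, K.2.star_eq,
    RCLike.star_def, Complex.conj_I, Matrix.smul_mul, Matrix.mul_smul, Matrix.mul_assoc, neg_smul,
    Matrix.mul_neg]
  module

theorem continuous_fderiv_lie {Φ : Matrix n n ℂ → ℂ} (hΦ : ContDiff ℂ 1 Φ) (K : Matrix n n ℂ) :
    Continuous fun X => fderiv ℂ Φ X ⁅K, X⁆ := by
  have := hΦ.continuous_fderiv one_ne_zero
  simp only [Ring.lie_def]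
  fun_prop

theorem hasDerivAt_comp_conjStarAlgAut_expUnitary_mul (B : Matrix n n ℂ) {Φ : Matrix n n ℂ → ℂ}
    (hΦ : Differentiable ℂ Φ) (K : selfAdjoint (Matrix n n ℂ)) (U : unitaryGroup n ℂ) (s : ℝ) :
    HasDerivAt (fun s : ℝ => Φ (Ad (selfAdjoint.expUnitary (s • K) * U) B))
      (Complex.I * fderiv ℂ Φ (Ad (selfAdjoint.expUnitary (s • K) * U) B)
        ⁅(K : Matrix n n ℂ), Ad (selfAdjoint.expUnitary (s • K) * U) B⁆) s := by
  simp only [Unitary.conjStarAlgAut_mul_apply, ← smul_eq_mul Complex.I, ← map_smul]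
  exact (hΦ.differentiableAt.hasFDerivAt.restrictScalars ℝ).comp_hasDerivAt s
    (hasDerivAt_conjStarAlgAut_expUnitary K (Ad U B) s)

variable [MeasurableSpace (unitaryGroup n ℂ)] [BorelSpace (unitaryGroup n ℂ)]
  (μ : Measure (unitaryGroup n ℂ)) [IsFiniteMeasure μ] [μ.IsMulLeftInvariant]

theorem integral_fderiv_lie_eq_zero_of_selfAdjoint (B : Matrix n n ℂ) {Φ : Matrix n n ℂ → ℂ}
    (hΦ : ContDiff ℂ 1 Φ) (K : selfAdjoint (Matrix n n ℂ)) :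
    ∫ U : unitaryGroup n ℂ, fderiv ℂ Φ (Ad U B) ⁅(K : Matrix n n ℂ), Ad U B⁆ ∂μ = 0 := by
  have hcont := continuous_conjStarAlgAut B
  have hI := integral_eq_zero_of_hasDerivAt_mul_left μ (hΦ.continuous.comp hcont)
    (continuous_const.mul ((continuous_fderiv_lie hΦ (K : Matrix n n ℂ)).comp hcont))
    (hasDerivAt_comp_conjStarAlgAut_expUnitary_mul B (hΦ.differentiable one_ne_zero) K)
  exact (mul_eq_zero.1 ((integral_const_mul Complex.I _).symm.trans hI)).resolve_left
    Complex.I_ne_zero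

theorem integral_fderiv_lie_eq_zero (B : Matrix n n ℂ) {Φ : Matrix n n ℂ → ℂ}
    (hΦ : ContDiff ℂ 1 Φ) (K : Matrix n n ℂ) :
    ∫ U : unitaryGroup n ℂ, fderiv ℂ Φ (Ad U B) ⁅K, Ad U B⁆ ∂μ = 0 := by
  have hint (K : Matrix n n ℂ) :
      Integrable (fun U : unitaryGroup n ℂ => fderiv ℂ Φ (Ad U B) ⁅K, Ad U B⁆) μ :=
    integrable_of_continuous μ
      ((continuous_fderiv_lie hΦ K).comp (continuous_conjStarAlgAut B))
  have hsplit (X : Matrix n n ℂ) :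
      ⁅K, X⁆ = ⁅(realPart K : Matrix n n ℂ), X⁆ +
        Complex.I • ⁅(imaginaryPart K : Matrix n n ℂ), X⁆ := by
    conv_lhs => rw [← realPart_add_I_smul_imaginaryPart K]
    simp only [Ring.lie_def, Matrix.add_mul, Matrix.mul_add, smul_mul_assoc, mul_smul_comm]
    module
  simp only [hsplit, map_add, map_smul, smul_eq_mul]
  rw [integral_add (hint _) ((hint _).const_mul _), integral_const_mul,
    integral_fderiv_lie_eq_zero_of_selfAdjoint μ B hΦ,
    integral_fderiv_lie_eq_zero_of_selfAdjoint μ B hΦ, mul_zero, add_zero]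

theorem integral_sum_fderiv_lie_single_apply_eq_zero (B : Matrix n n ℂ)
    {Φ : Matrix n n ℂ → Matrix n n ℂ} (hΦ : ContDiff ℂ 1 Φ) :
    ∫ U : unitaryGroup n ℂ,
      ∑ i, ∑ j, fderiv ℂ Φ (Ad U B) ⁅single i j (1 : ℂ), Ad U B⁆ i j ∂μ = 0 := by
  let entry (i j : n) := (entryLinearMap ℂ ℂ i j).toContinuousLinearMap
  have hentry (i j : n) : ContDiff ℂ 1 fun X => entry i j (Φ X) := (entry i j).contDiff.comp hΦ
  have hfderiv (i j : n) (X V : Matrix n n ℂ) :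
      fderiv ℂ Φ X V i j = fderiv ℂ (fun X => entry i j (Φ X)) X V :=
    DFunLike.congr_fun ((entry i j).hasFDerivAt.comp X
      (hΦ.differentiable one_ne_zero X).hasFDerivAt).fderiv.symm V
  have hint (i j : n) : Integrable (fun U : unitaryGroup n ℂ =>
      fderiv ℂ (fun X => entry i j (Φ X)) (Ad U B) ⁅single i j (1 : ℂ), Ad U B⁆) μ :=
    integrable_of_continuous μ
      ((continuous_fderiv_lie (hentry i j) _).comp (continuous_conjStarAlgAut B))
  simp only [hfderiv]
  rw [integral_finsetSum _ fun i _ => integrable_finsetSum _ fun j _ => hint i j]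
  refine Finset.sum_eq_zero fun i _ => ?_
  rw [integral_finsetSum _ fun j _ => hint i j]
  exact Finset.sum_eq_zero fun j _ => integral_fderiv_lie_eq_zero μ B (hentry i j) _

theorem integral_trace_pow_mul_add_eq_zero (A B : Matrix n n ℂ) (m : ℕ) :
    ∫ U : unitaryGroup n ℂ, ((Ad U B * A).trace ^ m *
        (2 * (Fintype.card n * (Ad U B * A).trace - B.trace * A.trace)) +
      m * (Ad U B * A).trace ^ (m - 1) * (⁅Ad U B, A⁆ ^ 2).trace) ∂μ = 0 := by
  let ℓ := (traceLinearMap n ℂ ℂ ∘ₗ LinearMap.mulRight ℂ A).toContinuousLinearMap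
  let L := (LinearMap.mulRight ℂ A - LinearMap.mulLeft ℂ A).toContinuousLinearMap
  have hderiv (X : Matrix n n ℂ) : HasFDerivAt ((fun X => ℓ X ^ m) • ⇑L) _ X :=
    (ℓ.hasFDerivAt.pow m).smul L.hasFDerivAt
  rw [← integral_sum_fderiv_lie_single_apply_eq_zero μ B ((ℓ.contDiff.pow m).smul L.contDiff)]
  congr with U
  rw [(hderiv _).fderiv, ← trace_conjStarAlgAut U B]
  generalize Ad U B = X
  have hL (X : Matrix n n ℂ) : L X = ⁅X, A⁆ := rfl
  have hℓ (X : Matrix n n ℂ) : ℓ X = (X * A).trace := rfl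
  simp [hL, hℓ, Finset.sum_add_distrib, ← Finset.mul_sum, mul_assoc,
    sum_lie_lie_single_apply, trace_lie_mul, sum_trace_single_mul_mul_apply, sq]

theorem integral_card_mul_trace_mul_add_eq_zero {A B : Matrix n n ℂ} (hA : A.trace = 0)
    (hB : B.trace = 0) :
    ∫ U : unitaryGroup n ℂ, (Fintype.card n * (Ad U B * A * (Ad U B * A)).trace +
      (Ad U B * A).trace ^ 2) ∂μ = 0 := by
  let L := (LinearMap.mulRight ℂ A).toContinuousLinearMap
  have hderiv (X : Matrix n n ℂ) : HasFDerivAt (fun X => L X * L X) _ X :=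
    L.hasFDerivAt.mul' L.hasFDerivAt
  rw [← integral_sum_fderiv_lie_single_apply_eq_zero μ B (L.contDiff.mul L.contDiff)]
  congr with U
  rw [(hderiv _).fderiv]
  have hX := (trace_conjStarAlgAut U B).trans hB
  generalize Ad U B = X at *
  have hL (X : Matrix n n ℂ) : L X = X * A := rfl
  simp [hL, Finset.sum_add_distrib, sum_lie_single_mul_mul_apply,
    sum_mul_lie_single_mul_apply, hA, hX, sq, add_comm]

end ByParts

end Haar

section Moments
variable [MeasurableSpace (unitaryGroup n ℂ)] [BorelSpace (unitaryGroup n ℂ)]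
  (μ : Measure (unitaryGroup n ℂ)) [IsProbabilityMeasure μ] [μ.IsMulLeftInvariant]

theorem integral_trace_conjStarAlgAut_mul (A B : Matrix n n ℂ) :
    Fintype.card n * ∫ U : unitaryGroup n ℂ, (Ad U B * A).trace ∂μ = B.trace * A.trace := by
  have hcont := continuous_conjStarAlgAut B
  have h := integral_trace_pow_mul_add_eq_zero μ A B 0
  simp only [pow_zero, one_mul, Nat.cast_zero, zero_mul, add_zero] at h
  rw [integral_const_mul, integral_sub (integrable_of_continuous μ (by fun_prop))
    (integrable_const _), integral_const_mul, integral_const, probReal_univ, one_smul] at h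
  linear_combination h / 2

theorem card_sq_sub_one_mul_integral_trace_sq {A B : Matrix n n ℂ} (hA : A.trace = 0)
    (hB : B.trace = 0) :
    ((Fintype.card n : ℂ) ^ 2 - 1) * ∫ U : unitaryGroup n ℂ, (Ad U B * A).trace ^ 2 ∂μ =
      (A ^ 2).trace * (B ^ 2).trace := by
  have hcont := continuous_conjStarAlgAut B
  have hcont2 := continuous_conjStarAlgAut (B ^ 2)
  have h1 := integral_trace_pow_mul_add_eq_zero μ A B 1
  have h2 := integral_card_mul_trace_mul_add_eq_zero μ hA hB
  have h3 := integral_trace_conjStarAlgAut_mul μ (A ^ 2) (B ^ 2)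
  have hpow (U : unitaryGroup n ℂ) : Ad U B ^ 2 = Ad U (B ^ 2) := (map_pow _ _ _).symm
  have hsq (U : unitaryGroup n ℂ) :
      (Ad U B * A).trace * (2 * (Fintype.card n * (Ad U B * A).trace)) =
        2 * Fintype.card n * (Ad U B * A).trace ^ 2 := by ring
  simp only [pow_one, hA, mul_zero, sub_zero, Nat.cast_one, one_mul, Nat.sub_self, pow_zero,
    trace_lie_sq, hpow, hsq] at h1
  rw [integral_add (integrable_of_continuous μ (by fun_prop))
    (integrable_of_continuous μ (by fun_prop)), integral_sub
    (integrable_of_continuous μ (by fun_prop)) (integrable_of_continuous μ (by fun_prop)),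
    integral_const_mul, integral_const_mul, integral_const_mul] at h1
  rw [integral_add (integrable_of_continuous μ (by fun_prop))
    (integrable_of_continuous μ (by fun_prop)), integral_const_mul] at h2
  linear_combination (Fintype.card n : ℂ) / 2 * h1 - h2 + h3

section Real

variable {H ρ : Matrix n n ℂ} (hH : H.IsHermitian) (hρ : ρ.IsHermitian)

include hH hρ

theorem integral_rotatedEnergy_sq [Nontrivial n] (hH0 : H.trace = 0)
    (hρ0 : ρ.trace = 0) :
    ∫ U, rotatedEnergy H ρ U ^ 2 ∂μ =
      (H ^ 2).trace.re * (ρ ^ 2).trace.re / ((Fintype.card n : ℝ) ^ 2 - 1) := by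
  have hcard : (1 : ℝ) < Fintype.card n := by exact_mod_cast Fintype.one_lt_card
  have h := card_sq_sub_one_mul_integral_trace_sq μ hH0 hρ0
  simp only [← ofReal_rotatedEnergy hH hρ, ← Complex.ofReal_pow] at h
  rw [integral_complex_ofReal] at h
  have hre := congrArg Complex.re h
  rw [Complex.mul_re (H ^ 2).trace, sq H, im_trace_mul_eq_zero hH hH] at hre
  rw [eq_div_iff (by nlinarith), mul_comm]
  norm_cast at hre
  simpa [sq H] using hre

theorem integral_rotatedEnergy_pow_succ (hH0 : H.trace = 0) (m : ℕ) :
    2 * Fintype.card n * ∫ U, rotatedEnergy H ρ U ^ (m + 1) ∂μ =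
      m * ∫ U, rotatedEnergy H ρ U ^ (m - 1) * -(⁅Ad U ρ, H⁆ ^ 2).trace.re ∂μ := by
  have hcont := continuous_conjStarAlgAut ρ
  have hE := continuous_rotatedEnergy H ρ
  have hlie : Continuous fun U : unitaryGroup n ℂ => (⁅Ad U ρ, H⁆ ^ 2).trace := by
    simp only [Ring.lie_def]
    fun_prop
  have h := congrArg RCLike.re (integral_trace_pow_mul_add_eq_zero μ H ρ m)
  rw [← integral_re (integrable_of_continuous μ (by fun_prop))] at h
  have hre (U : unitaryGroup n ℂ) : RCLike.re ((Ad U ρ * H).trace ^ m *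
        (2 * (Fintype.card n * (Ad U ρ * H).trace - ρ.trace * H.trace)) +
      m * (Ad U ρ * H).trace ^ (m - 1) * (⁅Ad U ρ, H⁆ ^ 2).trace) =
      2 * Fintype.card n * rotatedEnergy H ρ U ^ (m + 1) -
        m * (rotatedEnergy H ρ U ^ (m - 1) * -(⁅Ad U ρ, H⁆ ^ 2).trace.re) := by
    rw [← ofReal_rotatedEnergy hH hρ, hH0]
    simp [← Complex.ofReal_pow]
    ring
  simp only [hre] at h
  rw [integral_sub (integrable_of_continuous μ (by fun_prop))
    (integrable_of_continuous μ (by fun_prop)), integral_const_mul, integral_const_mul,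
    map_zero] at h
  exact sub_eq_zero.1 h

variable {R : ℝ} (hH0 : H.trace = 0) (hR : ∀ U, |rotatedEnergy H ρ U| ≤ R)

include hH0 hR

theorem integral_rotatedEnergy_pow_even_succ_le [Nonempty n] (k : ℕ) :
    ∫ U, rotatedEnergy H ρ U ^ (2 * (k + 1)) ∂μ ≤
      (2 * k + 1) * (R ^ 2 / Fintype.card n) * ∫ U, rotatedEnergy H ρ U ^ (2 * k) ∂μ := by
  have hE := continuous_rotatedEnergy H ρ
  have hcont := continuous_conjStarAlgAut ρ
  have hlie : Continuous fun U : unitaryGroup n ℂ => (⁅Ad U ρ, H⁆ ^ 2).trace.re := by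
    simp only [Ring.lie_def]
    fun_prop
  have hcard : (0 : ℝ) < Fintype.card n := by exact_mod_cast Fintype.card_pos
  have hgrad (U : unitaryGroup n ℂ) : -(⁅Ad U ρ, H⁆ ^ 2).trace.re ≤ 2 * R ^ 2 := by
    refine neg_trace_lie_sq_re_le (isHermitian_conjStarAlgAut hρ U) hH fun W => ?_
    rw [rotatedEnergy, ← Unitary.conjStarAlgAut_mul_apply]
    exact hR (W * U)
  have hrec := integral_rotatedEnergy_pow_succ μ hH hρ hH0 (2 * k + 1)
  have hmono : ∫ U, rotatedEnergy H ρ U ^ (2 * k) * -(⁅Ad U ρ, H⁆ ^ 2).trace.re ∂μ ≤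
      ∫ U, rotatedEnergy H ρ U ^ (2 * k) * (2 * R ^ 2) ∂μ :=
    integral_mono (integrable_of_continuous μ (by fun_prop))
      (integrable_of_continuous μ (by fun_prop))
      fun U => mul_le_mul_of_nonneg_left (hgrad U) ((even_two_mul k).pow_nonneg _)
  rw [integral_mul_const] at hmono
  refine le_of_mul_le_mul_left ?_ (mul_pos two_pos hcard)
  calc 2 * Fintype.card n * ∫ U, rotatedEnergy H ρ U ^ (2 * (k + 1)) ∂μ
      = (2 * k + 1) *
          ∫ U, rotatedEnergy H ρ U ^ (2 * k) * -(⁅Ad U ρ, H⁆ ^ 2).trace.re ∂μ := by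
        exact_mod_cast hrec
    _ ≤ (2 * k + 1) * ((∫ U, rotatedEnergy H ρ U ^ (2 * k) ∂μ) * (2 * R ^ 2)) := by gcongr
    _ = _ := by field_simp

theorem isSubgaussianMomentSeq_integral_rotatedEnergy_pow [Nonempty n] :
    IsSubgaussianMomentSeq (fun p => ∫ U, rotatedEnergy H ρ U ^ p ∂μ) R
      (R ^ 2 / Fintype.card n) where
  zero := by simp
  even_nonneg k := integral_nonneg fun U => (even_two_mul k).pow_nonneg _
  abs_odd_le k := by
    have hE := continuous_rotatedEnergy H ρ
    rw [← integral_const_mul]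
    refine abs_integral_le_integral_abs.trans (integral_mono
      (integrable_of_continuous μ (by fun_prop)) (integrable_of_continuous μ (by fun_prop))
      fun U => ?_)
    have heven : 0 ≤ rotatedEnergy H ρ U ^ (2 * k) := (even_two_mul k).pow_nonneg _
    calc |rotatedEnergy H ρ U ^ (2 * k + 1)|
        = |rotatedEnergy H ρ U| * rotatedEnergy H ρ U ^ (2 * k) := by
          rw [pow_succ', abs_mul, abs_of_nonneg heven]
      _ ≤ R * rotatedEnergy H ρ U ^ (2 * k) := by gcongr; exact hR U
  even_succ_le := integral_rotatedEnergy_pow_even_succ_le μ hH hρ hH0 hR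

end Real

end Moments

section CentralMoments

/-- The traceless part `ΔX = X - (Tr X / d) I`. -/
noncomputable def tracelessPart (X : Matrix n n ℂ) : Matrix n n ℂ :=
  X - (X.trace / Fintype.card n) • 1

/-- The Haar average `Tr H · Tr ρ / d` of the rotated energy. -/
noncomputable def meanEnergy (H ρ : Matrix n n ℂ) : ℝ :=
  (H.trace * ρ.trace).re / Fintype.card n

/-- The variance `Σ² = Tr[ΔH²] Tr[Δρ²] / (d² - 1)` of the rotated energy. -/
noncomputable def energyVariance (H ρ : Matrix n n ℂ) : ℝ :=
  (tracelessPart H ^ 2).trace.re * (tracelessPart ρ ^ 2).trace.re / ((Fintype.card n : ℝ) ^ 2 - 1)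

theorem isHermitian_tracelessPart {X : Matrix n n ℂ} (hX : X.IsHermitian) :
    (tracelessPart X).IsHermitian := by
  have htr : IsSelfAdjoint X.trace := by rw [IsSelfAdjoint, ← trace_conjTranspose, hX.eq]
  exact hX.sub (isHermitian_one.smul (htr.div (.natCast _)))

variable [Nonempty n]

theorem trace_tracelessPart (X : Matrix n n ℂ) : (tracelessPart X).trace = 0 := by
  simp [tracelessPart]

theorem rotatedEnergy_tracelessPart (H ρ : Matrix n n ℂ) (U : unitaryGroup n ℂ) :
    rotatedEnergy (tracelessPart H) (tracelessPart ρ) U = rotatedEnergy H ρ U - meanEnergy H ρ := by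
  have hH : tracelessPart H = H - (H.trace / Fintype.card n) • 1 := rfl
  have hρ : Ad U (tracelessPart ρ) = Ad U ρ - (ρ.trace / Fintype.card n) • 1 := by
    rw [tracelessPart, map_sub, map_smul, map_one]
  have htrace : (Ad U (tracelessPart ρ) * tracelessPart H).trace =
      (Ad U ρ * H).trace - H.trace * ρ.trace / (Fintype.card n : ℝ) := by
    rw [hH, Matrix.mul_sub, trace_sub, mul_smul_comm, Matrix.mul_one, trace_smul,
      trace_conjStarAlgAut, trace_tracelessPart, smul_zero, sub_zero, hρ, Matrix.sub_mul,
      trace_sub, smul_mul_assoc, Matrix.one_mul, trace_smul, smul_eq_mul, div_mul_eq_mul_div,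
      mul_comm ρ.trace, Complex.ofReal_natCast]
  rw [rotatedEnergy, htrace, Complex.sub_re, Complex.div_ofReal_re]
  rfl

variable [MeasurableSpace (unitaryGroup n ℂ)] (μ : Measure (unitaryGroup n ℂ))

/-- The `p`-th central moment `Σ⁽ᵖ⁾ = ∫ (Tr[UρU†H] - Tr H · Tr ρ / d)ᵖ dμ(U)`. -/
noncomputable def energyCentralMoment (H ρ : Matrix n n ℂ) (p : ℕ) : ℝ :=
  ∫ U, (rotatedEnergy H ρ U - meanEnergy H ρ) ^ p ∂μ

variable [BorelSpace (unitaryGroup n ℂ)] [IsProbabilityMeasure μ] [μ.IsMulLeftInvariant]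
  {H ρ : Matrix n n ℂ}

theorem isSubgaussianMomentSeq_energyCentralMoment (hH : H.IsHermitian) (hρ : ρ.IsHermitian)
    {R : ℝ} (hR : ∀ U, |rotatedEnergy H ρ U - meanEnergy H ρ| ≤ R) :
    IsSubgaussianMomentSeq (energyCentralMoment μ H ρ) R (R ^ 2 / Fintype.card n) := by
  simp only [← rotatedEnergy_tracelessPart] at hR
  unfold energyCentralMoment
  simp only [← rotatedEnergy_tracelessPart]
  exact isSubgaussianMomentSeq_integral_rotatedEnergy_pow μ (isHermitian_tracelessPart hH)
    (isHermitian_tracelessPart hρ) (trace_tracelessPart H) hR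

end CentralMoments

section TailBound

variable [Nontrivial n] [MeasurableSpace (unitaryGroup n ℂ)] [BorelSpace (unitaryGroup n ℂ)]
  (μ : Measure (unitaryGroup n ℂ)) [IsProbabilityMeasure μ] [μ.IsMulLeftInvariant]
  {H ρ : Matrix n n ℂ}

theorem energyCentralMoment_two (hH : H.IsHermitian) (hρ : ρ.IsHermitian) :
    energyCentralMoment μ H ρ 2 = energyVariance H ρ := by
  simp only [energyCentralMoment, ← rotatedEnergy_tracelessPart]
  exact integral_rotatedEnergy_sq μ (isHermitian_tracelessPart hH) (isHermitian_tracelessPart hρ)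
    (trace_tracelessPart H) (trace_tracelessPart ρ)

theorem moment_series_tail_bound_general (hH : H.IsHermitian) (hρ : ρ.IsHermitian) {R : ℝ}
    (hR : ∀ U, |rotatedEnergy H ρ U - meanEnergy H ρ| ≤ R) {N : ℕ} (hN : N ^ 2 ≤ Fintype.card n)
    {t : ℝ} (ht : |t| * R < N) :
    Summable (fun k => |t| ^ (N + k) / (N + k)! *
        |energyCentralMoment μ H ρ (N + k) - gaussianMoment (energyVariance H ρ) (N + k)|) ∧
      ∑' k, |t| ^ (N + k) / (N + k)! *
          |energyCentralMoment μ H ρ (N + k) - gaussianMoment (energyVariance H ρ) (N + k)| ≤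
        t ^ 2 * energyVariance H ρ / (⌈(N : ℝ) / 2⌉₊)! + |t| * R / N ! := by
  rw [← energyCentralMoment_two μ hH hρ]
  refine (isSubgaussianMomentSeq_energyCentralMoment μ hH hρ hR).summable_and_tsum_tail_le ?_ ht
  have hcard : (N : ℝ) ^ 2 ≤ Fintype.card n := by exact_mod_cast hN
  calc (N : ℝ) ^ 2 * (R ^ 2 / Fintype.card n) = R ^ 2 * (N ^ 2 / Fintype.card n) := by ring
    _ ≤ R ^ 2 := mul_le_of_le_one_right (sq_nonneg R) (div_le_one_of_le₀ hcard (by positivity))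

end TailBound

/-- **Statement 17.** Tail bound for the moment series: for `|t| < min{√(N*/Σ²), N*/ΔE_max}`,
`Σ_{p=N*}^∞ (|t|^p/p!)·|Σ^(p) − Σ_G^(p)| ≤ (1/⌈N*/2⌉!)·t²Σ²/(1 − t²Σ²/N*)
  + (1/N*!)·|t|ΔE_max/(1 − |t|ΔE_max/N*)`. -/
theorem moment_series_tail_bound (d : ℕ) (hd : 2 ≤ d)
    (μ : Measure (Matrix.unitaryGroup (Fin d) ℂ))
    [μ.IsHaarMeasure] [IsProbabilityMeasure μ]
    (H ρ : Matrix (Fin d) (Fin d) ℂ) (hH : H.IsHermitian)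
    (hρ : ρ.PosSemidef) (hρtr : ρ.trace = 1)
    (hΔHne : H - (H.trace / (d : ℂ)) • (1 : Matrix (Fin d) (Fin d) ℂ) ≠ 0)
    (hΔρne : ρ - ((d : ℂ))⁻¹ • (1 : Matrix (Fin d) (Fin d) ℂ) ≠ 0)
    -- sorted eigenvalue listings of `H` and `ρ`
    (ε : Fin d → ℝ) (hεmono : Monotone ε)
    (hεeig : ∃ σ : Equiv.Perm (Fin d), ∀ i, ε i = hH.eigenvalues (σ i))
    (lam : Fin d → ℝ) (hlamanti : Antitone lam)
    (hlameig : ∃ σ : Equiv.Perm (Fin d), ∀ i, lam i = hρ.1.eigenvalues (σ i))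
    -- the relevant scalar quantities
    (muH S2 DEmax : ℝ) (Nstar : ℕ)
    (hmuH : muH = H.trace.re / d)
    (hS2 : S2 = (((H - (H.trace / (d : ℂ)) • 1) ^ 2).trace.re
        * ((ρ - ((d : ℂ))⁻¹ • 1) ^ 2).trace.re) / ((d : ℝ) ^ 2 - 1))
    (hDE : DEmax = max |(∑ j, lam j * ε j) - muH| |(∑ j, lam j.rev * ε j) - muH|)
    (hDEpos : 0 < DEmax)
    (hN : Nstar = min ⌊Real.sqrt d⌋₊ ⌊((d : ℝ) / (2 * Real.sqrt 3)) ^ ((4 : ℝ) / 7)⌋₊)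
    -- the central moments and their Gaussian counterparts
    (Sp SG : ℕ → ℝ)
    (hSp : ∀ p : ℕ, Sp p = ∫ U : Matrix.unitaryGroup (Fin d) ℂ,
        (((U : Matrix (Fin d) (Fin d) ℂ) * ρ
            * star (U : Matrix (Fin d) (Fin d) ℂ) * H).trace.re - muH) ^ p ∂μ)
    (hSG : ∀ p : ℕ, SG p = if Even p
        then (Nat.doubleFactorial (p - 1) : ℝ) * S2 ^ (p / 2) else 0)
    -- condition on `t`
    (t : ℝ)
    (ht : |t| < min (Real.sqrt ((Nstar : ℝ) / S2)) ((Nstar : ℝ) / DEmax)) :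
    Summable (fun k : ℕ => (|t| ^ (Nstar + k) / ((Nstar + k).factorial : ℝ))
        * |Sp (Nstar + k) - SG (Nstar + k)|) ∧
      (∑' k : ℕ, (|t| ^ (Nstar + k) / ((Nstar + k).factorial : ℝ))
          * |Sp (Nstar + k) - SG (Nstar + k)|)
        ≤ (1 / ((⌈(Nstar : ℝ) / 2⌉₊).factorial : ℝ))
            * (t ^ 2 * S2 / (1 - t ^ 2 * S2 / Nstar))
          + (1 / (Nstar.factorial : ℝ))
            * (|t| * DEmax / (1 - |t| * DEmax / Nstar)) := by
  have : Nontrivial (Fin d) := Fin.nontrivial_iff_two_le.2 hd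
  have hmean : meanEnergy H ρ = muH := by simp [meanEnergy, hρtr, hmuH]
  have hvar : energyVariance H ρ = S2 := by simp [energyVariance, tracelessPart, hρtr, hS2]
  have hR (U : unitaryGroup (Fin d) ℂ) : |rotatedEnergy H ρ U - meanEnergy H ρ| ≤ DEmax := by
    have hmem := rotatedEnergy_mem_Icc hH hρ.1 hεmono hεeig hlamanti hlameig U
    rw [hmean, hDE]
    exact abs_le_max_abs_abs (sub_le_sub_right hmem.1 _) (sub_le_sub_right hmem.2 _)
  have hNd : Nstar ^ 2 ≤ Fintype.card (Fin d) := by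
    rw [Fintype.card_fin]
    exact sq_le_of_le_floor_sqrt (hN.trans_le (min_le_left _ _))
  have hSp' : Sp = energyCentralMoment μ H ρ := by ext p; rw [hSp, ← hmean]; rfl
  have hSG' : SG = gaussianMoment (energyVariance H ρ) := by ext p; rw [hSG, hvar]; rfl
  obtain ⟨htS2, htDE⟩ := lt_min_iff.1 ht
  have htDE' : |t| * DEmax < Nstar := (lt_div_iff₀ hDEpos).1 htDE
  have hN0 : (0 : ℝ) < Nstar := htDE'.trans_le' (by positivity)
  have htS2' : t ^ 2 * S2 < Nstar := sq_mul_lt_of_abs_lt_sqrt_div hN0.le htS2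
  obtain ⟨hsum, hle⟩ := moment_series_tail_bound_general μ hH hρ.1 hR hNd htDE'
  rw [hSp', hSG']
  exact ⟨hsum, hle.trans (add_le_add (hvar ▸ div_factorial_le_mul_div_one_sub htS2' hN0 _)
    (div_factorial_le_mul_div_one_sub htDE' hN0 _))⟩
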